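/- arXiv:2012.10742 — 6 statements merged into one kernel-verified Lean document; each statement's English description precedes it below -/
import Mathlib

section
/- For every natural number n and permutations σ, τ of an n-element set, σ and τ are conjugate in Sym(n) if and only if the characteristic polynomials (over ℚ) of their permutation matrices are equal. In other words, the map from conjugacy classes of Sym(n) to characteristic polynomials of the permutation representation is injective. -/
open Polynomial

/-- The permutation matrix of `σ` over `ℚ`: the `(i,j)` entry is `1` if `σ j = i`, else `0`. -/
def permMatrixQ {n : ℕ} (σ : Equiv.Perm (Fin n)) : Matrix (Fin n) (Fin n) ℚ :=
  fun i j => if σ j = i then 1 else 0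

/-! The characteristic polynomial of a matrix `M` determines `det (p(M))` for every monic `p`:
after extending scalars, `p` is a product of linear factors `X + a`, and `det (M + a)` is, up to
sign, a value of the characteristic polynomial. Taking `p = Y ^ k - X` shows that it determines
the characteristic polynomial, hence the trace, of `M ^ k`. For the permutation matrix of `σ` this
trace is the number of fixed points of `σ ^ k`, which is the sum over `d ∣ k` of the number of
points of minimal period `d`. Möbius inversion recovers the latter numbers, and for `d ≠ 1` they
are `d` times the number of `d`-cycles of `σ`. -/

section Matrix

variable {n R : Type*} [Fintype n] [DecidableEq n] [CommRing R] {M N : Matrix n n R}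

theorem det_aeval_X_add_C (M : Matrix n n R) (a : R) :
    (aeval M (X + C a)).det = (-1) ^ Fintype.card n * M.charpoly.eval (-a) := by
  have shift_eq_neg : aeval M (X + C a) = -(Matrix.scalar n (-a) - M) := by
    rw [map_add, aeval_X, aeval_C, map_neg, neg_sub, sub_neg_eq_add]
    rfl
  rw [shift_eq_neg, Matrix.det_neg, Matrix.eval_charpoly]

theorem det_aeval_eq_of_charpoly_eq_of_splits (h : M.charpoly = N.charpoly) {p : R[X]}
    (hp : p.Splits) : (aeval M p).det = (aeval N p).det := by
  induction hp using Submonoid.closure_induction with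
  | mem p hp =>
    obtain ⟨a, rfl⟩ | ⟨a, rfl⟩ := hp
    · rw [aeval_C, aeval_C]
    · rw [det_aeval_X_add_C, det_aeval_X_add_C, h]
  | one => rw [map_one, map_one]
  | mul p q _ _ hp hq => rw [map_mul, map_mul, Matrix.det_mul, Matrix.det_mul, hp, hq]

theorem det_aeval_map_algebraMap {S : Type*} [CommRing S] [Algebra R S] (M : Matrix n n R)
    (p : R[X]) :
    (aeval (M.map (algebraMap R S)) (p.map (algebraMap R S))).det =
      algebraMap R S (aeval M p).det := by
  rw [aeval_map_algebraMap, RingHom.map_det]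
  exact congrArg Matrix.det (aeval_algHom_apply (Algebra.ofId R S).mapMatrix M p)

theorem det_aeval_eq_of_charpoly_eq (h : M.charpoly = N.charpoly) {p : R[X]} (hp : p.Monic) :
    (aeval M p).det = (aeval N p).det := by
  nontriviality R
  obtain ⟨S, _, _, _, _, _, p_splits⟩ := hp.exists_splits_map
  have charpoly_map_eq :
      (M.map (algebraMap R S)).charpoly = (N.map (algebraMap R S)).charpoly := by
    rw [Matrix.charpoly_map, Matrix.charpoly_map, h]
  apply FaithfulSMul.algebraMap_injective R S
  rw [← det_aeval_map_algebraMap, ← det_aeval_map_algebraMap]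
  exact det_aeval_eq_of_charpoly_eq_of_splits charpoly_map_eq p_splits

theorem charpoly_pow_eq_neg_one_pow_mul_det_aeval (M : Matrix n n R) (k : ℕ) :
    (M ^ k).charpoly =
      (-1) ^ Fintype.card n * (aeval (M.map C) (X ^ k - C X : R[X][X])).det := by
  have charmatrix_eq : (M ^ k).charmatrix = -aeval (M.map C) (X ^ k - C X : R[X][X]) := by
    rw [map_sub, map_pow, aeval_X, aeval_C, neg_sub, Matrix.charmatrix, map_pow]
    rfl
  rw [Matrix.charpoly, charmatrix_eq, Matrix.det_neg]

theorem charpoly_pow_eq_of_charpoly_eq (h : M.charpoly = N.charpoly) (k : ℕ) :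
    (M ^ k).charpoly = (N ^ k).charpoly := by
  obtain rfl | hk := eq_or_ne k 0
  · rw [pow_zero, pow_zero]
  have charpoly_map_eq : (M.map C).charpoly = (N.map C).charpoly := by
    rw [Matrix.charpoly_map, Matrix.charpoly_map, h]
  rw [charpoly_pow_eq_neg_one_pow_mul_det_aeval, charpoly_pow_eq_neg_one_pow_mul_det_aeval,
    det_aeval_eq_of_charpoly_eq charpoly_map_eq (monic_X_pow_sub_C X hk)]

theorem trace_pow_eq_of_charpoly_eq (h : M.charpoly = N.charpoly) (k : ℕ) :
    (M ^ k).trace = (N ^ k).trace := by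
  rw [Matrix.trace_eq_neg_charpoly_nextCoeff, Matrix.trace_eq_neg_charpoly_nextCoeff,
    charpoly_pow_eq_of_charpoly_eq h]

end Matrix

section PeriodicPoints

open Finset Function

theorem eq_of_sum_divisors_eq {A : Type*} [AddCancelCommMonoid A] {f g : ℕ → A}
    (h : ∀ k ≠ 0, ∑ d ∈ k.divisors, f d = ∑ d ∈ k.divisors, g d) {d : ℕ} (hd : d ≠ 0) :
    f d = g d := by
  induction d using Nat.strong_induction_on with
  | _ d ih =>
    have proper_sum_eq : ∑ e ∈ d.properDivisors, f e = ∑ e ∈ d.properDivisors, g e :=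
      sum_congr rfl fun e he ↦
        ih e (Nat.mem_properDivisors.1 he).2 (Nat.pos_of_mem_properDivisors he).ne'
    have sum_eq := h d hd
    rw [← Nat.cons_self_properDivisors hd, sum_cons, sum_cons, proper_sum_eq] at sum_eq
    exact add_right_cancel sum_eq

variable {α : Type*} [Fintype α] [DecidableEq α]

theorem card_isPeriodicPt_eq_sum_divisors (f : α → α) {k : ℕ} (hk : k ≠ 0) :
    #{x | IsPeriodicPt f k x} = ∑ d ∈ k.divisors, #{x | minimalPeriod f x = d} := by
  rw [sum_card_fiberwise_eq_card_filter]
  simp only [isPeriodicPt_iff_minimalPeriod_dvd, Nat.mem_divisors, hk, ne_eq, not_false_eq_true,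
    and_true]

theorem card_minimalPeriod_eq_of_card_isPeriodicPt_eq {β : Type*} [Fintype β] [DecidableEq β]
    {f : α → α} {g : β → β} (h : ∀ k ≠ 0, #{x | IsPeriodicPt f k x} = #{x | IsPeriodicPt g k x})
    {d : ℕ} (hd : d ≠ 0) : #{x | minimalPeriod f x = d} = #{x | minimalPeriod g x = d} := by
  refine eq_of_sum_divisors_eq (f := fun e ↦ #{x | minimalPeriod f x = e})
    (g := fun e ↦ #{x | minimalPeriod g x = e}) (fun k hk ↦ ?_) hd
  rw [← card_isPeriodicPt_eq_sum_divisors f hk, ← card_isPeriodicPt_eq_sum_divisors g hk, h k hk]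

end PeriodicPoints

section Perm

open Equiv.Perm Finset Function

variable {α : Type*}

theorem minimalPeriod_eq_card_of_isCycleOn {f : Equiv.Perm α} {s : Finset α} {x : α}
    (hf : f.IsCycleOn s) (hx : x ∈ s) : minimalPeriod f x = #s :=
  eq_of_forall_dvd fun k ↦ by
    rw [← isPeriodicPt_iff_minimalPeriod_dvd, ← hf.pow_apply_eq hx, ← iterate_eq_pow,
      IsPeriodicPt, IsFixedPt]

variable [Fintype α] [DecidableEq α]

theorem filter_minimalPeriod_eq_biUnion_support (σ : Equiv.Perm α) {d : ℕ} (hd : d ≠ 1) :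
    ({x | minimalPeriod σ x = d} : Finset α) =
      {c ∈ σ.cycleFactorsFinset | #c.support = d}.biUnion support := by
  ext x
  simp only [mem_filter, mem_univ, true_and, mem_biUnion]
  constructor
  · rintro rfl
    have hx : x ∈ σ.support := mem_support.2 fun h ↦ hd (minimalPeriod_eq_one_iff_isFixedPt.2 h)
    have mem_support_cycleOf : x ∈ (σ.cycleOf x).support :=
      mem_support_cycleOf_iff.2 ⟨.refl σ x, hx⟩
    refine ⟨σ.cycleOf x, ⟨cycleOf_mem_cycleFactorsFinset_iff.2 hx, ?_⟩, mem_support_cycleOf⟩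
    exact (minimalPeriod_eq_card_of_isCycleOn (isCycleOn_support_cycleOf σ x)
      mem_support_cycleOf).symm
  · rintro ⟨c, ⟨hc, rfl⟩, hx⟩
    exact minimalPeriod_eq_card_of_isCycleOn (isCycleOn_support_of_mem_cycleFactorsFinset hc) hx

theorem card_minimalPeriod_eq_count_cycleType_mul (σ : Equiv.Perm α) {d : ℕ} (hd : d ≠ 1) :
    #{x | minimalPeriod σ x = d} = σ.cycleType.count d * d := by
  have count_eq : σ.cycleType.count d = #{c ∈ σ.cycleFactorsFinset | #c.support = d} := by
    rw [cycleType_def, Multiset.count_map, ← filter_val, card_val]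
    simp only [Function.comp_apply, eq_comm]
  rw [filter_minimalPeriod_eq_biUnion_support σ hd, count_eq]
  have pairwiseDisjoint_support : (({c ∈ σ.cycleFactorsFinset | #c.support = d} :
      Finset (Equiv.Perm α)) : Set (Equiv.Perm α)).PairwiseDisjoint support :=
    fun c hc c' hc' hne ↦ (σ.cycleFactorsFinset_pairwise_disjoint (mem_filter.1 hc).1
      (mem_filter.1 hc').1 hne).disjoint_support
  rw [card_biUnion pairwiseDisjoint_support]
  exact sum_const_nat fun c hc ↦ (mem_filter.1 hc).2

theorem cycleType_eq_of_card_isPeriodicPt_eq {σ τ : Equiv.Perm α}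
    (h : ∀ k ≠ 0, #{x | IsPeriodicPt σ k x} = #{x | IsPeriodicPt τ k x}) :
    σ.cycleType = τ.cycleType := by
  ext d
  by_cases hd : 2 ≤ d
  · have count_mul_eq := card_minimalPeriod_eq_of_card_isPeriodicPt_eq h (d := d) (by lia)
    rw [card_minimalPeriod_eq_count_cycleType_mul σ (by lia),
      card_minimalPeriod_eq_count_cycleType_mul τ (by lia)] at count_mul_eq
    exact Nat.eq_of_mul_eq_mul_right (by lia) count_mul_eq
  · rw [Multiset.count_eq_zero_of_notMem (hd ∘ two_le_of_mem_cycleType),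
      Multiset.count_eq_zero_of_notMem (hd ∘ two_le_of_mem_cycleType)]

end Perm

section PermMatrix

open Finset Function

variable {α R : Type*} [Fintype α] [DecidableEq α]

theorem permMatrix_pow [Semiring R] (σ : Equiv.Perm α) (k : ℕ) :
    (σ ^ k).permMatrix R = σ.permMatrix R ^ k := by
  induction k with
  | zero => rw [pow_zero, pow_zero, Matrix.permMatrix_one]
  | succ k ih => rw [pow_succ, pow_succ', Matrix.permMatrix_mul, ih]

theorem trace_permMatrix_pow [Semiring R] (σ : Equiv.Perm α) (k : ℕ) :
    (σ.permMatrix R ^ k).trace = (#{x | IsPeriodicPt σ k x} : R) := by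
  rw [← permMatrix_pow, Matrix.trace_permutation, ← Set.ncard_coe_finset,
    ← Equiv.Perm.iterate_eq_pow, coe_filter_univ]
  rfl

theorem charpoly_permMatrix_eq_of_isConj [CommRing R] {σ τ : Equiv.Perm α} (h : IsConj σ τ) :
    (σ.permMatrix R).charpoly = (τ.permMatrix R).charpoly := by
  obtain ⟨c, rfl⟩ := isConj_iff.1 h
  rw [Matrix.permMatrix_mul, Matrix.charpoly_mul_comm, ← Matrix.permMatrix_mul,
    inv_mul_cancel_left]

theorem isConj_iff_charpoly_permMatrix_eq_general [CommRing R] [CharZero R] (σ τ : Equiv.Perm α) :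
    IsConj σ τ ↔ (σ.permMatrix R).charpoly = (τ.permMatrix R).charpoly := by
  refine ⟨charpoly_permMatrix_eq_of_isConj, fun h ↦ ?_⟩
  rw [Equiv.Perm.isConj_iff_cycleType_eq]
  refine cycleType_eq_of_card_isPeriodicPt_eq fun k _ ↦ Nat.cast_injective (R := R) ?_
  rw [← trace_permMatrix_pow, ← trace_permMatrix_pow, trace_pow_eq_of_charpoly_eq h]

theorem permMatrixQ_eq_transpose_permMatrix {n : ℕ} (σ : Equiv.Perm (Fin n)) :
    permMatrixQ σ = (σ.permMatrix ℚ).transpose := by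
  ext i j
  simp [permMatrixQ, PEquiv.toMatrix_apply]

end PermMatrix

/-- Two permutations in `Sym(n)` are conjugate if and only if the characteristic polynomials
(over `ℚ`) of their permutation matrices coincide; i.e. the map from conjugacy classes to
characteristic polynomials of the permutation representation is injective. -/
theorem isConj_iff_charpoly_permMatrix_eq {n : ℕ} (σ τ : Equiv.Perm (Fin n)) :
    IsConj σ τ ↔ (permMatrixQ σ).charpoly = (permMatrixQ τ).charpoly := by
  rw [permMatrixQ_eq_transpose_permMatrix, permMatrixQ_eq_transpose_permMatrix,
    Matrix.charpoly_transpose, Matrix.charpoly_transpose]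
  exact isConj_iff_charpoly_permMatrix_eq_general σ τ
end

section
/- Let n ≥ 1 and let σ be a permutation of an n-element set. Write the characteristic polynomial over ℚ of the permutation matrix of σ as P(X) = (X − 1)·S(X), where S is a monic polynomial of degree n − 1. Then the reverse of S (the polynomial with the coefficient sequence written in reverse order) equals (−1)^{n−1} · sign(σ) · S. Equivalently, writing S(X) = X^{n−1} − s_1 X^{n−2} + ... + (−1)^{n−1} s_{n−1}, the coefficients satisfy s_{n−1} = sign(σ), s_{n−1}² = 1, and s_k · s_{n−1} = s_{n−1−k} for all 0 ≤ k ≤ n−1 (with s_0 = 1). -/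
open Polynomial

/-!
If `A * B = 1`, then `X • 1 - B = -(B * (1 - X • A))`, so the characteristic polynomial of `B` is,
up to a scalar, the reverse of that of `A`. A permutation matrix has the same characteristic
polynomial as its inverse, because its inverse is its transpose; hence its characteristic polynomial
is its own reverse up to the scalar `(-1) ^ n * det A`. The factor `X - 1` is the negative of its
own reverse and can be cancelled, which leaves the same symmetry, with one more sign, for the
quotient.
-/

section Reverse

variable {R : Type*}

lemma coeff_natDegree_sub_of_reverse_eq_smul [Semiring R] {p : R[X]} {c : R}
    (h : p.reverse = c • p) {k : ℕ} (hk : k ≤ p.natDegree) :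
    p.coeff (p.natDegree - k) = c * p.coeff k := by
  rw [← revAt_le hk, ← coeff_reverse, h, coeff_smul, smul_eq_mul]

lemma monic_X_sub_one [Ring R] : (X - 1 : R[X]).Monic := by
  simpa using monic_X_sub_C (1 : R)

lemma natDegree_X_sub_one [Ring R] [Nontrivial R] : (X - 1 : R[X]).natDegree = 1 := by
  simpa using natDegree_X_sub_C (1 : R)

lemma natDegree_X_sub_one_mul [Ring R] {p : R[X]} (hp : p ≠ 0) :
    ((X - 1) * p).natDegree = p.natDegree + 1 := by
  have : Nontrivial R := nontrivial_iff.1 (nontrivial_of_ne p 0 hp)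
  rw [monic_X_sub_one.natDegree_mul' hp, natDegree_X_sub_one, add_comm]

lemma reverse_X_sub_one [Ring R] : (X - 1 : R[X]).reverse = -(X - 1) := by
  nontriviality R
  rw [reverse, natDegree_X_sub_one, reflect_sub, reflect_one_X, reflect_one, pow_one, neg_sub]

lemma reverse_X_sub_one_mul [Ring R] (p : R[X]) :
    ((X - 1) * p).reverse = -((X - 1) * p.reverse) := by
  rcases eq_or_ne p 0 with rfl | hp
  · simp
  · have leadingCoeff_ne : (X - 1 : R[X]).leadingCoeff * p.leadingCoeff ≠ 0 := by
      rwa [monic_X_sub_one.leadingCoeff, one_mul, leadingCoeff_ne_zero]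
    rw [reverse_mul leadingCoeff_ne, reverse_X_sub_one, neg_mul]

lemma reverse_eq_neg_smul_of_reverse_X_sub_one_mul [CommRing R] {p : R[X]} {c : R}
    (h : ((X - 1) * p).reverse = c • ((X - 1) * p)) : p.reverse = -c • p := by
  apply monic_X_sub_one.isRegular.left
  change (X - 1) * p.reverse = (X - 1) * (-c • p)
  rw [mul_smul_comm, neg_smul, ← h, reverse_X_sub_one_mul, neg_neg]

end Reverse

section SignedCoeff

variable {R : Type*}

/-- The coefficient `s k` in `p = s 0 * X ^ d - s 1 * X ^ (d - 1) + ⋯ + (-1) ^ d * s d`, where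
`d = p.natDegree`; for a monic split `p` it is the `k`-th elementary symmetric function of the
roots. Truncated subtraction makes it `± p.coeff 0` for `k > d`. -/
def signedCoeff [Ring R] (p : R[X]) (k : ℕ) : R :=
  (-1) ^ k * p.coeff (p.natDegree - k)

lemma signedCoeff_zero [Ring R] (p : R[X]) : signedCoeff p 0 = p.leadingCoeff := by
  simp [signedCoeff]

variable [CommRing R] {p : R[X]} {e : R}

lemma signedCoeff_natDegree_sub_of_reverse_eq_smul
    (h : p.reverse = ((-1) ^ p.natDegree * e) • p) {k : ℕ} (hk : k ≤ p.natDegree) :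
    signedCoeff p (p.natDegree - k) = signedCoeff p k * e := by
  have sign_eq : (-1 : R) ^ (p.natDegree - k) * (-1) ^ p.natDegree = (-1) ^ k := by
    rw [← pow_add, neg_one_pow_congr]
    grind
  rw [signedCoeff, signedCoeff, coeff_natDegree_sub_of_reverse_eq_smul h (Nat.sub_le _ _)]
  linear_combination e * p.coeff (p.natDegree - k) * sign_eq

lemma signedCoeff_natDegree_of_reverse_eq_smul (hp : p.Monic)
    (h : p.reverse = ((-1) ^ p.natDegree * e) • p) : signedCoeff p p.natDegree = e := by
  simpa [signedCoeff_zero, hp.leadingCoeff] using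
    signedCoeff_natDegree_sub_of_reverse_eq_smul h (Nat.zero_le _)

end SignedCoeff

section Charpoly

variable {ι R : Type*} [Fintype ι] [DecidableEq ι] [CommRing R] {A B : Matrix ι ι R}

lemma det_eq_det_of_charpoly_eq (h : A.charpoly = B.charpoly) : A.det = B.det := by
  rw [A.det_eq_sign_charpoly_coeff, B.det_eq_sign_charpoly_coeff, h]

lemma reverse_charpoly_of_mul_eq_one (hAB : A * B = 1) :
    A.charpoly.reverse = ((-1) ^ Fintype.card ι * A.det) • B.charpoly := by
  have isUnit_det : IsUnit A.det := Matrix.isUnit_det_of_right_inverse hAB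
  have charpoly_B : B.charpoly = (-1) ^ Fintype.card ι * C (Ring.inverse A.det) *
      A.charpoly.reverse := by
    rw [A.reverse_charpoly, ← A.charpoly_inv (A.isUnit_iff_isUnit_det.2 isUnit_det),
      Matrix.inv_eq_right_inv hAB]
  have sign_mul_self : (-1 : R[X]) ^ Fintype.card ι * (-1) ^ Fintype.card ι = 1 := by
    rw [← mul_pow, neg_one_mul, neg_neg, one_pow]
  have det_mul_inverse : C A.det * C (Ring.inverse A.det) = 1 := by
    rw [← C_mul, Ring.mul_inverse_cancel _ isUnit_det, C_1]
  rw [charpoly_B, smul_eq_C_mul]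
  simp only [C_mul, C_pow, C_neg, C_1]
  linear_combination -A.charpoly.reverse *
    (C A.det * C (Ring.inverse A.det) * sign_mul_self + det_mul_inverse)

end Charpoly

lemma permMatrixQ_eq_permMatrix_inv {n : ℕ} (σ : Equiv.Perm (Fin n)) :
    permMatrixQ σ = σ⁻¹.permMatrix ℚ := by
  ext i j
  simp [permMatrixQ, PEquiv.toMatrix_apply, Equiv.eq_symm_apply, eq_comm]

lemma permMatrix_mul_transpose {ι R : Type*} [Fintype ι] [DecidableEq ι] [NonAssocSemiring R]
    (σ : Equiv.Perm ι) : σ.permMatrix R * (σ.permMatrix R).transpose = 1 := by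
  rw [Matrix.transpose_permMatrix, ← Matrix.permMatrix_mul, inv_mul_cancel, Matrix.permMatrix_one]

theorem reverse_standard_charpoly_general {ι R : Type*} [Fintype ι] [DecidableEq ι] [CommRing R]
    {A B : Matrix ι ι R} (hAB : A * B = 1) (hcharpoly : A.charpoly = B.charpoly)
    {S : R[X]} (hS : A.charpoly = (X - 1) * S)
    {s : ℕ → R} (hs : ∀ k, s k = (-1) ^ k * S.coeff (Fintype.card ι - 1 - k)) :
    S.reverse = ((-1) ^ (Fintype.card ι - 1) * A.det) • S ∧
    s (Fintype.card ι - 1) = A.det ∧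
    s (Fintype.card ι - 1) ^ 2 = 1 ∧
    ∀ k ≤ Fintype.card ι - 1, s k * s (Fintype.card ι - 1) = s (Fintype.card ι - 1 - k) := by
  rcases subsingleton_or_nontrivial R with _ | _
  · simp [eq_iff_true_of_subsingleton]
  have S_monic : S.Monic := monic_X_sub_one.of_mul_monic_left (hS ▸ A.charpoly_monic)
  have card_eq : S.natDegree + 1 = Fintype.card ι := by
    rw [← natDegree_X_sub_one_mul S_monic.ne_zero, ← hS, A.charpoly_natDegree_eq_dim]
  have reverse_S : S.reverse = ((-1) ^ S.natDegree * A.det) • S := by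
    have reverse_charpoly := reverse_charpoly_of_mul_eq_one hAB
    rw [← hcharpoly, hS] at reverse_charpoly
    simpa [← card_eq, pow_succ] using reverse_eq_neg_smul_of_reverse_X_sub_one_mul reverse_charpoly
  have det_sq : A.det ^ 2 = 1 := by
    calc A.det ^ 2 = A.det * B.det := by rw [sq, ← det_eq_det_of_charpoly_eq hcharpoly]
      _ = 1 := by rw [← Matrix.det_mul, hAB, Matrix.det_one]
  rw [← card_eq, Nat.add_sub_cancel] at hs ⊢
  obtain rfl : s = signedCoeff S := funext hs
  rw [signedCoeff_natDegree_of_reverse_eq_smul S_monic reverse_S]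
  exact ⟨reverse_S, rfl, det_sq,
    fun k hk ↦ (signedCoeff_natDegree_sub_of_reverse_eq_smul reverse_S hk).symm⟩

/-- Let `n ≥ 1`, `σ ∈ Sym(n)`, and write the characteristic polynomial of the permutation
matrix of `σ` as `P = (X - 1) * S` with `S` monic of degree `n - 1`.  Then the reverse of
`S` equals `(-1)^(n-1) * sign σ * S`.  Equivalently, with
`S = X^{n-1} - s₁ X^{n-2} + ⋯ + (-1)^{n-1} s_{n-1}` (so `s_k = (-1)^k * coeff S (n-1-k)`),
one has `s_{n-1} = sign σ`, `s_{n-1}² = 1`, and `s_k * s_{n-1} = s_{n-1-k}` for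
`0 ≤ k ≤ n - 1`. -/
theorem reverse_standard_charpoly {n : ℕ} (hn : 1 ≤ n) (σ : Equiv.Perm (Fin n))
    (S : Polynomial ℚ) (hS : S.Monic) (hdeg : S.natDegree = n - 1)
    (hP : (permMatrixQ σ).charpoly = (X - 1) * S)
    (s : ℕ → ℚ) (hs : ∀ k, s k = (-1 : ℚ) ^ k * S.coeff (n - 1 - k)) :
    S.reverse = ((-1 : ℚ) ^ (n - 1) * ((Equiv.Perm.sign σ : ℤ) : ℚ)) • S ∧
    s (n - 1) = ((Equiv.Perm.sign σ : ℤ) : ℚ) ∧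
    s (n - 1) ^ 2 = 1 ∧
    ∀ k ≤ n - 1, s k * s (n - 1) = s (n - 1 - k) := by
  rw [permMatrixQ_eq_permMatrix_inv] at hP
  simpa using reverse_standard_charpoly_general (permMatrix_mul_transpose σ⁻¹)
    (Matrix.charpoly_transpose _).symm hP (s := s) (by simpa using hs)
end

section
/- Let G be a finite group, let χ be the character of a finite-dimensional complex representation of G, let g ∈ G with g^m = 1, and let ζ ∈ ℂ be a primitive m-th root of unity. Then χ(g) lies in the subfield ℚ(ζ) of ℂ, and for every integer k coprime to m and every field automorphism φ of ℚ(ζ) over ℚ with φ(ζ) = ζ^k, one has φ(χ(g)) = χ(g^k). That is, the Galois action σ(k) on character values satisfies χ^{σ(k)}(𝒞(g)) = χ(𝒞(g^k)). -/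
open IntermediateField

/-!
Since `X ^ m - 1` has the `m` distinct roots `ζ ^ i`, the Lagrange basis polynomials at these nodes,
evaluated at `ρ g`, project onto its eigenspaces. Hence `ρ g` is diagonalizable, and with `dᵢ` the
dimension of the `ζ ^ i`-eigenspace, `χ(g ^ k) = ∑ i < m, dᵢ (ζ ^ i) ^ k = P(ζ ^ k)` for the
polynomial `P = ∑ i < m, dᵢ X ^ i`, which does not depend on `k`. As `P` has coefficients in `ℕ`,
a ring homomorphism sending `ζ` to `ζ ^ k` sends `χ(g) = P(ζ)` to `P(ζ ^ k) = χ(g ^ k)`.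
-/

section Trace

open Polynomial Module

variable {ι K V : Type*} [Field K] [AddCommGroup V] [Module K V] {f : End K V}

lemma aeval_lagrangeBasis_apply_mem_eigenspace [DecidableEq ι] {s : Finset ι} {v : ι → K}
    (hf : aeval f (Lagrange.nodal s v) = 0) {i : ι} (hi : i ∈ s) (x : V) :
    aeval f (Lagrange.basis s v i) x ∈ f.eigenspace (v i) := by
  have hdvd : Lagrange.nodal s v ∣ (X - C (v i)) * Lagrange.basis s v i := by
    rw [Lagrange.basis_eq_prod_sub_inv_mul_nodal_div hi, mul_left_comm,
      EuclideanDomain.mul_div_cancel' (X_sub_C_ne_zero _) (Lagrange.X_sub_C_dvd_nodal v hi)]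
    exact dvd_mul_left _ _
  have hzero : aeval f ((X - C (v i)) * Lagrange.basis s v i) = 0 :=
    aeval_eq_zero_of_dvd_aeval_eq_zero hdvd hf
  rw [End.mem_eigenspace_iff, ← sub_eq_zero]
  simpa using LinearMap.congr_fun hzero x

lemma iSup_eigenspace_eq_top_of_aeval_nodal_eq_zero {s : Finset ι} {v : ι → K}
    (hv : Set.InjOn v s) (hf : aeval f (Lagrange.nodal s v) = 0) :
    ⨆ i : s, f.eigenspace (v i) = ⊤ := by
  classical
  rcases s.eq_empty_or_nonempty with rfl | hs
  · have : Subsingleton V := ⟨fun x y ↦ by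
      have h (z : V) : z = 0 := by simpa using LinearMap.congr_fun hf z
      rw [h x, h y]⟩
    exact Subsingleton.elim _ _
  · refine eq_top_iff.mpr fun x _ ↦ ?_
    have hx : x = ∑ i ∈ s, aeval f (Lagrange.basis s v i) x := by
      rw [← LinearMap.sum_apply, ← map_sum, Lagrange.sum_basis hv hs, map_one, End.one_apply]
    rw [hx]
    exact Submodule.sum_mem _ fun i hi ↦
      Submodule.mem_iSup_of_mem (⟨i, hi⟩ : s) (aeval_lagrangeBasis_apply_mem_eigenspace hf hi x)

variable [FiniteDimensional K V]

lemma trace_aeval_eq_sum_finrank_eigenspace_mul_eval {s : Finset ι} {v : ι → K}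
    (hv : Set.InjOn v s) (hf : aeval f (Lagrange.nodal s v) = 0) (p : K[X]) :
    LinearMap.trace K V (aeval f p) =
      ∑ i ∈ s, (finrank K (f.eigenspace (v i)) : K) * p.eval (v i) := by
  classical
  have hscalar (μ : K) (x : V) (hx : x ∈ f.eigenspace μ) : aeval f p x = p.eval μ • x :=
    End.aeval_apply_of_mem_apply_eq_smul (End.mem_eigenspace_iff.mp hx)
  have hmaps (i : s) : Set.MapsTo (aeval f p) (f.eigenspace (v i)) (f.eigenspace (v i)) :=
    fun x hx ↦ by
      rw [hscalar _ x hx]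
      exact Submodule.smul_mem _ _ hx
  have hinternal : DirectSum.IsInternal fun i : s ↦ f.eigenspace (v i) :=
    DirectSum.isInternal_submodule_of_iSupIndep_of_iSup_eq_top
      (f.eigenspaces_iSupIndep.comp hv.injective)
      (iSup_eigenspace_eq_top_of_aeval_nodal_eq_zero hv hf)
  rw [LinearMap.trace_eq_sum_trace_restrict hinternal hmaps, ← s.sum_coe_sort]
  refine Finset.sum_congr rfl fun i _ ↦ ?_
  have hrestrict : (aeval f p).restrict (hmaps i) = p.eval (v i) • LinearMap.id :=
    LinearMap.ext fun x ↦ Subtype.ext (hscalar _ x x.2)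
  rw [hrestrict, map_smul, LinearMap.trace_id, smul_eq_mul, mul_comm]

lemma exists_trace_pow_eq_aeval_pow {m : ℕ} (hm : 0 < m) (hf : f ^ m = 1)
    {ζ : K} (hζ : IsPrimitiveRoot ζ m) :
    ∃ P : ℕ[X], ∀ k : ℕ, LinearMap.trace K V (f ^ k) = aeval (ζ ^ k) P := by
  have hnodal : Lagrange.nodal (Finset.range m) (ζ ^ ·) = X ^ m - 1 := by
    simpa [Lagrange.nodal_eq] using (X_pow_sub_C_eq_prod hζ hm (one_pow m)).symm
  have hannihilate : aeval f (Lagrange.nodal (Finset.range m) (ζ ^ ·)) = 0 := by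
    simp [hnodal, hf]
  have hinj : Set.InjOn (ζ ^ ·) (Finset.range m : Set ℕ) := fun i hi j hj h ↦
    hζ.pow_inj (Finset.mem_range.mp hi) (Finset.mem_range.mp hj) h
  refine ⟨∑ i ∈ Finset.range m, C (finrank K (f.eigenspace (ζ ^ i))) * X ^ i, fun k ↦ ?_⟩
  simpa [← pow_mul, mul_comm k] using
    trace_aeval_eq_sum_finrank_eigenspace_mul_eval hinj hannihilate (X ^ k)

end Trace

theorem galois_action_on_character_values_general {K L G V : Type*} [Field K] [Field L]
    [Algebra K L] [Monoid G] [AddCommGroup V] [Module L V] [FiniteDimensional L V]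
    (ρ : Representation L G V) {g : G} {m : ℕ} (hm : 0 < m) (hg : g ^ m = 1)
    {ζ : L} (hζ : IsPrimitiveRoot ζ m) :
    ∃ h : ρ.character g ∈ K⟮ζ⟯, ∀ (k : ℕ) (φ : K⟮ζ⟯ →+* L),
      φ (AdjoinSimple.gen K ζ) = ζ ^ k → φ ⟨ρ.character g, h⟩ = ρ.character (g ^ k) := by
  have hρ : ρ g ^ m = 1 := by rw [← map_pow, hg, map_one]
  obtain ⟨P, hP⟩ := exists_trace_pow_eq_aeval_pow hm hρ hζ
  have hchar (k : ℕ) : ρ.character (g ^ k) = Polynomial.aeval (ζ ^ k) P := by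
    rw [Representation.character, map_pow, hP]
  have hval : ρ.character g = (Polynomial.aeval (AdjoinSimple.gen K ζ) P : K⟮ζ⟯) :=
    calc ρ.character g = Polynomial.aeval ζ P := by simpa only [pow_one] using hchar 1
      _ = (Polynomial.aeval (AdjoinSimple.gen K ζ) P : K⟮ζ⟯) :=
        Polynomial.aeval_algebraMap_apply L (AdjoinSimple.gen K ζ) P
  have hmem : ρ.character g ∈ K⟮ζ⟯ := hval ▸ Subtype.property _
  refine ⟨hmem, fun k φ hφ ↦ ?_⟩
  calc φ ⟨ρ.character g, hmem⟩
      = φ (Polynomial.aeval (AdjoinSimple.gen K ζ) P) := congrArg φ (Subtype.ext hval)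
    _ = Polynomial.aeval (φ (AdjoinSimple.gen K ζ)) P :=
        (Polynomial.aeval_algHom_apply φ.toNatAlgHom _ P).symm
    _ = ρ.character (g ^ k) := by rw [hφ, hchar]

/-- Let `χ` be the character of a finite-dimensional complex representation of a finite
group `G`, let `g ∈ G` with `g^m = 1`, and let `ζ` be a primitive `m`-th root of unity
in `ℂ`.  Then `χ(g) ∈ ℚ(ζ)`, and for every `k` coprime to `m` and every automorphism `φ`
of `ℚ(ζ)/ℚ` with `φ(ζ) = ζ^k`, one has `φ(χ(g)) = χ(g^k)`. -/
theorem galois_action_on_character_values {G : Type} [Group G] [Fintype G]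
    (V : FDRep ℂ G) (g : G) (m : ℕ) (hm : 0 < m) (hg : g ^ m = 1)
    (ζ : ℂ) (hζ : IsPrimitiveRoot ζ m) :
    ∃ h : V.character g ∈ ℚ⟮ζ⟯,
      ∀ k : ℕ, Nat.Coprime k m →
        ∀ φ : ℚ⟮ζ⟯ ≃ₐ[ℚ] ℚ⟮ζ⟯,
          (φ ⟨ζ, mem_adjoin_simple_self ℚ ζ⟩ : ℂ) = ζ ^ k →
          (φ ⟨V.character g, h⟩ : ℂ) = V.character (g ^ k) := by
  obtain ⟨h, hφ⟩ := galois_action_on_character_values_general (K := ℚ) V.ρ hm hg hζ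
  exact ⟨h, fun k _ φ ↦ hφ k ((algebraMap ℚ⟮ζ⟯ ℂ).comp φ)⟩
end

section
/- Let F be a finite field with q elements, let f ∈ F[X] be a squarefree polynomial of positive degree, and let K be a splitting field of f over F. The q-power Frobenius map x ↦ x^q is an F-algebra automorphism of K permuting the set of roots of f in K, and the multiset of sizes of the orbits of this permutation on the roots of f equals the multiset of degrees of the monic irreducible factors of f in F[X]. In other words, the factorization type of f equals the cycle type of Frobenius acting on the roots of f. -/
open Polynomial

/-!
Let `φ` be an `F`-endomorphism of `K` whose only fixed elements are those of `F`. The product of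
`X - y` over a finite orbit of `φ` is fixed by `φ`, so it has coefficients in `F`, and it divides
the minimal polynomial of each point of the orbit because `φ` preserves minimal polynomials. It is
therefore that minimal polynomial. Hence two roots of `f` lie in one orbit exactly when they are
roots of the same irreducible factor, and the degree of that factor is the size of the orbit.
For the Frobenius of a finite field with `q` elements, the fixed elements are the roots of
`X ^ q - X`, which splits over `F`.
-/

open Finset UniqueFactorizationMonoid

theorem map_val_image_eq_map_val_image {α β γ δ : Type*} [DecidableEq β] [DecidableEq γ]
    {s : Finset α} {f : α → β} {g : α → γ} {d : β → δ} {e : γ → δ}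
    (hker : ∀ x ∈ s, ∀ y ∈ s, f x = f y ↔ g x = g y) (hde : ∀ x ∈ s, d (f x) = e (g x)) :
    (s.image f).val.map d = (s.image g).val.map e := by
  let graph := s.image fun x => (f x, g x)
  have hmem : ∀ p ∈ graph, ∃ x ∈ s, (f x, g x) = p := fun p => mem_image.mp
  have hfst : Set.InjOn Prod.fst (graph : Set (β × γ)) := fun p hp p' hp' h => by
    obtain ⟨x, hx, rfl⟩ := hmem p hp
    obtain ⟨y, hy, rfl⟩ := hmem p' hp'
    exact Prod.ext h ((hker x hx y hy).mp h)
  have hsnd : Set.InjOn Prod.snd (graph : Set (β × γ)) := fun p hp p' hp' h => by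
    obtain ⟨x, hx, rfl⟩ := hmem p hp
    obtain ⟨y, hy, rfl⟩ := hmem p' hp'
    exact Prod.ext ((hker x hx y hy).mpr h) h
  calc (s.image f).val.map d = graph.val.map (d ∘ Prod.fst) := by
        rw [← Multiset.map_map, ← image_val_of_injOn hfst, image_image]; rfl
    _ = graph.val.map (e ∘ Prod.snd) := Multiset.map_congr rfl fun p hp => by
        obtain ⟨x, hx, rfl⟩ := hmem p hp
        exact hde x hx
    _ = (s.image g).val.map e := by
        rw [← Multiset.map_map, ← image_val_of_injOn hsnd, image_image]; rfl

section Perm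

open Equiv Equiv.Perm

variable {α β : Type*} [Fintype α] [DecidableEq α]

theorem cycleFactorsFinset_eq_image_cycleOf_support (σ : Perm α) :
    σ.cycleFactorsFinset = σ.support.image σ.cycleOf := by
  ext c
  rw [mem_image]
  constructor
  · intro hc
    obtain ⟨x, hx⟩ := (mem_cycleFactorsFinset_iff.mp hc).1.nonempty_support
    exact ⟨x, mem_cycleFactorsFinset_support_le hc hx, (cycle_is_cycleOf hx hc).symm⟩
  · rintro ⟨x, hx, rfl⟩
    exact cycleOf_mem_cycleFactorsFinset_iff.mpr hx

variable [DecidableEq β] {σ : Perm α} {m : α → β}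

theorem cycleType_eq_map_card_fiber (hm : ∀ x y, m x = m y ↔ σ.SameCycle x y) :
    σ.cycleType = (σ.support.image m).val.map fun b => #{x | m x = b} := by
  rw [cycleType_def, cycleFactorsFinset_eq_image_cycleOf_support]
  refine map_val_image_eq_map_val_image (fun x hx y hy => ?_) fun x hx => ?_
  · rw [hm, sameCycle_iff_cycleOf_eq_of_mem_support hx hy]
  · refine congrArg Finset.card (Finset.ext fun y => ?_)
    simp [hm, mem_support_cycleOf_iff' (mem_support.mp hx), sameCycle_comm]

theorem partition_parts_eq_map_card_fiber (hm : ∀ x y, m x = m y ↔ σ.SameCycle x y) :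
    σ.partition.parts = (univ.image m).val.map fun b => #{x | m x = b} := by
  have hfixed (x) (hx : x ∈ σ.supportᶜ) (y) : m y = m x ↔ y = x := by
    have hσx : Function.IsFixedPt σ x := by simpa [Function.IsFixedPt] using hx
    rw [hm]
    exact ⟨fun h => (h.symm.eq_of_left hσx).symm, fun h => h ▸ .rfl⟩
  have hdisj : Disjoint (σ.support.image m) (σ.supportᶜ.image m) := by
    simp_rw [disjoint_left, mem_image, not_exists, not_and]
    rintro _ ⟨x, hx, rfl⟩ y hy hxy
    exact mem_compl.mp hy ((hfixed y hy x).mp hxy.symm ▸ hx)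
  have hinj : Set.InjOn m (σ.supportᶜ : Finset α) := fun x _ y hy => (hfixed y hy x).mp
  have hones : (σ.supportᶜ.image m).val.map (fun b => #{x | m x = b}) =
      Multiset.replicate (Fintype.card α - #σ.support) 1 := by
    rw [image_val_of_injOn hinj, Multiset.map_map, ← card_compl, card_def, ← Multiset.map_const']
    exact Multiset.map_congr rfl fun x hx => by simp [hfixed x hx, filter_eq']
  have hsplit : univ.image m = (σ.support.image m).disjUnion (σ.supportᶜ.image m) hdisj := by
    rw [disjUnion_eq_union, ← image_union, union_compl]
  rw [hsplit, disjUnion_val, Multiset.map_add, ← cycleType_eq_map_card_fiber hm, hones,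
    parts_partition]

end Perm

theorem equalizer_frobeniusAlgHom_id (F K : Type*) [Field F] [Fintype F] [CommRing K]
    [IsDomain K] [Algebra F K] :
    (FiniteField.frobeniusAlgHom F K).equalizer (AlgHom.id F K) = ⊥ := by
  refine eq_bot_iff.2 fun x hx => Algebra.mem_bot.mpr ?_
  have hsplits : Splits (X ^ Fintype.card F - X : F[X]) := by
    rw [splits_iff_card_roots, FiniteField.roots_X_pow_card_sub_X,
      FiniteField.X_pow_card_sub_X_natDegree_eq F Fintype.one_lt_card]
    rfl
  refine hsplits.mem_range_of_isRoot (i := algebraMap F K)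
    (FiniteField.X_pow_card_sub_X_ne_zero F Fintype.one_lt_card) ?_
  simpa [sub_eq_zero] using hx

theorem mem_normalizedFactors_iff_exists_minpoly_eq {F K : Type*} [Field F] [DecidableEq F]
    [Field K] [Algebra F K] {f : F[X]} (hf : f ≠ 0) (hsplits : (f.map (algebraMap F K)).Splits)
    {g : F[X]} :
    g ∈ normalizedFactors f ↔ ∃ x : f.rootSet K, minpoly F (x : K) = g := by
  rw [Polynomial.mem_normalizedFactors_iff hf]
  constructor
  · rintro ⟨hirr, hmonic, hdvd⟩
    have hgsplits : (g.map (algebraMap F K)).Splits :=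
      hsplits.of_dvd (map_ne_zero hf) (Polynomial.map_dvd _ hdvd)
    obtain ⟨x, hx⟩ := hgsplits.exists_eval_eq_zero (by simpa using hirr.degree_pos.ne')
    rw [eval_map_algebraMap] at hx
    exact ⟨⟨x, mem_rootSet.mpr ⟨hf, aeval_eq_zero_of_dvd_aeval_eq_zero hdvd hx⟩⟩,
      (minpoly.eq_of_irreducible_of_monic hirr hx hmonic).symm⟩
  · rintro ⟨⟨x, hx⟩, rfl⟩
    have hroot := (mem_rootSet.mp hx).2
    have hint : IsIntegral F x := IsAlgebraic.isIntegral ⟨f, hf, hroot⟩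
    exact ⟨minpoly.irreducible hint, minpoly.monic hint, minpoly.dvd F x hroot⟩

theorem mem_lifts_of_map_eq_self {R A : Type*} [CommSemiring R] [Semiring A] [Algebra R A]
    {φ : A →ₐ[R] A} (hφ : φ.equalizer (AlgHom.id R A) = ⊥) {p : A[X]}
    (hp : p.map (φ : A →+* A) = p) : p ∈ lifts (algebraMap R A) := by
  refine (lifts_iff_coeff_lifts p).mpr fun n => Algebra.mem_bot.mp ?_
  rw [← hφ]
  exact (coeff_map (φ : A →+* A) n).symm.trans (congrArg (coeff · n) hp)

section Endo

variable {F K : Type*} [Field F] [Field K] [Algebra F K] {φ : K →ₐ[F] K} {s : Set K}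
  {σ : Equiv.Perm s}

theorem minpoly_eq_of_sameCycle (hσ : ∀ x, (σ x : K) = φ x) {x y : s} (h : σ.SameCycle x y) :
    minpoly F (x : K) = minpoly F (y : K) := by
  have hstep (z : s) : minpoly F (σ z : K) = minpoly F (z : K) := by
    rw [hσ, minpoly.algHom_eq φ φ.injective]
  obtain ⟨n, rfl⟩ := h
  induction n with
  | zero => simp
  | succ n ih => rw [ih, add_comm, zpow_one_add, Equiv.Perm.mul_apply, hstep]
  | pred n ih =>
    rw [ih, ← hstep ((σ ^ (-(n : ℤ) - 1)) x), ← Equiv.Perm.mul_apply, ← zpow_one_add,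
      add_sub_cancel]

theorem prod_sameCycle_X_sub_C_mem_lifts [Fintype s] [DecidableRel σ.SameCycle]
    (hφ : φ.equalizer (AlgHom.id F K) = ⊥) (hσ : ∀ x, (σ x : K) = φ x) (x : s) :
    ∏ y with σ.SameCycle x y, (X - C (y : K)) ∈ lifts (algebraMap F K) := by
  refine mem_lifts_of_map_eq_self hφ ?_
  simp only [Polynomial.map_prod, Polynomial.map_sub, map_X, map_C, RingHom.coe_coe, ← hσ]
  exact prod_equiv σ (by simp) (by simp)

theorem map_minpoly_eq_prod_sameCycle [Fintype s] [DecidableRel σ.SameCycle]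
    (hφ : φ.equalizer (AlgHom.id F K) = ⊥) (hσ : ∀ x, (σ x : K) = φ x) (x : s) :
    (minpoly F (x : K)).map (algebraMap F K) = ∏ y with σ.SameCycle x y, (X - C (y : K)) := by
  have hmonic : (∏ y with σ.SameCycle x y, (X - C (y : K))).Monic := monic_prod_X_sub_C _ _
  obtain ⟨g, hg⟩ := (mem_lifts _).mp (prod_sameCycle_X_sub_C_mem_lifts hφ hσ x)
  have hgx : aeval (x : K) g = 0 := by
    rw [← eval_map_algebraMap, hg, eval_prod]
    exact prod_eq_zero (mem_filter.mpr ⟨mem_univ x, .rfl⟩) (by simp)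
  have hint : IsIntegral F (x : K) :=
    ⟨g, monic_of_injective (algebraMap F K).injective (hg ▸ hmonic), hgx⟩
  have hdvd : (minpoly F (x : K)).map (algebraMap F K) ∣
      ∏ y with σ.SameCycle x y, (X - C (y : K)) := by
    rw [← hg]
    exact Polynomial.map_dvd _ (minpoly.dvd F _ hgx)
  have hdvd' : ∏ y with σ.SameCycle x y, (X - C (y : K)) ∣
      (minpoly F (x : K)).map (algebraMap F K) := by
    refine prod_dvd_of_coprime
      ((pairwise_coprime_X_sub_C Subtype.val_injective).set_pairwise _) fun y hy => ?_
    rw [dvd_iff_isRoot, IsRoot.def, eval_map_algebraMap,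
      minpoly_eq_of_sameCycle hσ (mem_filter.mp hy).2, minpoly.aeval]
  exact eq_of_monic_of_associated ((minpoly.monic hint).map _) hmonic
    (associated_of_dvd_dvd hdvd hdvd')

theorem natDegree_minpoly_eq_card_sameCycle [Fintype s] [DecidableRel σ.SameCycle]
    (hφ : φ.equalizer (AlgHom.id F K) = ⊥) (hσ : ∀ x, (σ x : K) = φ x) (x : s) :
    (minpoly F (x : K)).natDegree = #{y | σ.SameCycle x y} := by
  rw [← natDegree_map (algebraMap F K), map_minpoly_eq_prod_sameCycle hφ hσ,
    natDegree_prod_of_monic _ _ fun y _ => monic_X_sub_C _]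
  simp

theorem minpoly_eq_iff_sameCycle [Finite s] (hφ : φ.equalizer (AlgHom.id F K) = ⊥)
    (hσ : ∀ x, (σ x : K) = φ x) (x y : s) :
    minpoly F (x : K) = minpoly F (y : K) ↔ σ.SameCycle x y := by
  classical
  have := Fintype.ofFinite s
  refine ⟨fun h => ?_, minpoly_eq_of_sameCycle hσ⟩
  have hroot : eval (y : K) ((minpoly F (x : K)).map (algebraMap F K)) = 0 := by
    rw [h, eval_map_algebraMap, minpoly.aeval]
  rw [map_minpoly_eq_prod_sameCycle hφ hσ, eval_prod, prod_eq_zero_iff] at hroot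
  obtain ⟨z, hz, hyz⟩ := hroot
  obtain rfl : y = z := by simpa [sub_eq_zero, Subtype.ext_iff] using hyz
  simpa using hz

end Endo

theorem partition_parts_eq_map_natDegree_normalizedFactors {F K : Type*} [Field F] [DecidableEq F]
    [Field K] [DecidableEq K] [Algebra F K] {φ : K →ₐ[F] K}
    (hφ : φ.equalizer (AlgHom.id F K) = ⊥) {f : F[X]} (hsq : Squarefree f)
    (hsplits : (f.map (algebraMap F K)).Splits) {σ : Equiv.Perm (f.rootSet K)}
    (hσ : ∀ x, (σ x : K) = φ x) :
    σ.partition.parts = (normalizedFactors f).map natDegree := by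
  have hfactors : (univ.image fun x : f.rootSet K => minpoly F (x : K)).val =
      normalizedFactors f := by
    have hnodup := (squarefree_iff_nodup_normalizedFactors hsq.ne_zero).mp hsq
    refine (Multiset.Nodup.ext (nodup _) hnodup).mpr fun g => ?_
    simp [mem_normalizedFactors_iff_exists_minpoly_eq hsq.ne_zero hsplits]
  rw [partition_parts_eq_map_card_fiber (minpoly_eq_iff_sameCycle hφ hσ), ← hfactors]
  refine Multiset.map_congr rfl fun g hg => ?_
  obtain ⟨x, -, rfl⟩ := mem_image.mp hg
  classical
  simp [natDegree_minpoly_eq_card_sameCycle hφ hσ, minpoly_eq_iff_sameCycle hφ hσ,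
    Equiv.Perm.sameCycle_comm]

theorem factorization_type_eq_frobenius_cycle_type_general {F K : Type*} [Field F] [Fintype F]
    [DecidableEq F] [Field K] [DecidableEq K] [Algebra F K] [Algebra.IsAlgebraic F K]
    {f : F[X]} (hsq : Squarefree f) (hsplits : (f.map (algebraMap F K)).Splits) :
    (∃ φ : K ≃ₐ[F] K, ∀ x : K, φ x = x ^ Fintype.card F) ∧
    ∃ σ : Equiv.Perm (f.rootSet K),
      (∀ x : f.rootSet K, (σ x : K) = (x : K) ^ Fintype.card F) ∧
      σ.partition.parts = (normalizedFactors f).map natDegree := by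
  let φ := FiniteField.frobeniusAlgEquivOfAlgebraic F K
  let σ : Equiv.Perm (f.rootSet K) := Equiv.Perm.subtypePerm φ.toEquiv fun x => by
    simp [mem_rootSet, aeval_algHom_apply]
  exact ⟨⟨φ, fun _ => rfl⟩, σ, fun _ => rfl, partition_parts_eq_map_natDegree_normalizedFactors
    (equalizer_frobeniusAlgHom_id F K) hsq hsplits fun _ => rfl⟩

/-- Let `F` be a finite field with `q` elements, `f ∈ F[X]` squarefree of positive degree,
and `K` a splitting field of `f` over `F`.  The `q`-power Frobenius is an `F`-algebra
automorphism of `K` which permutes the roots of `f` in `K`, and the multiset of orbit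
sizes of this permutation of the roots equals the multiset of degrees of the monic
irreducible factors of `f` in `F[X]`: the factorization type of `f` is the cycle type of
Frobenius acting on the roots. -/
theorem factorization_type_eq_frobenius_cycle_type
    {F K : Type} [Field F] [Fintype F] [DecidableEq F] [Field K] [DecidableEq K] [Algebra F K]
    (q : ℕ) (hq : Fintype.card F = q)
    (f : F[X]) (hsq : Squarefree f) (hdeg : 0 < f.natDegree)
    [Polynomial.IsSplittingField F K f] :
    (∃ φ : K ≃ₐ[F] K, ∀ x : K, φ x = x ^ q) ∧
    ∃ σ : Equiv.Perm (f.rootSet K),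
      (∀ x : f.rootSet K, (σ x : K) = (x : K) ^ q) ∧
      σ.partition.parts =
        (UniqueFactorizationMonoid.normalizedFactors f).map Polynomial.natDegree := by
  subst hq
  have := IsSplittingField.finiteDimensional K f
  exact factorization_type_eq_frobenius_cycle_type_general hsq (IsSplittingField.splits K f)
end

section
/- Let D₄ be the subgroup of Sym(4) generated by the 4-cycle (1 2 3 4) and the transposition (1 3). For a permutation σ of 4 elements, define integers s₁, s₂, s₃ by writing the characteristic polynomial over ℚ of its permutation matrix as (X − 1)·(X³ − s₁X² + s₂X − s₃). Then s₁² − s₁ − s₂ − s₃ − 2 = 0 for every σ ∈ D₄, while there exists a permutation σ ∈ Sym(4) (for instance any 3-cycle) with s₁² − s₁ − s₂ − s₃ − 2 ≠ 0. Hence s₁² − s₁ − s₂ − s₃ − 2 lies in the kernel ideal of the restriction of characters from Sym(4) to D₄ but not in the defining ideal of Sym(4), and its vanishing provides a test for D₄. -/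
open Polynomial

/-!
The permutation matrix `M` of `σ ∈ Sym(4)` is orthogonal, so its characteristic polynomial is
self-reciprocal up to the factor `det M`; comparing linear coefficients gives `s₂ = s₁ s₃`.
Since `tr M = s₁ + 1` and `det M = s₃`, the test polynomial factors as
`s₁² - s₁ - s₂ - s₃ - 2 = tr M * (tr M - det M - 3)`. With `tr M` the number of fixed points and
`det M` the sign, the only nonzero value on `Sym(4)` occurs for one fixed point, i.e. at the
3-cycles. Finally `D₄` centralizes the antipodal map `(1 3)(2 4)`, which acts freely, so no
element of `D₄` has exactly one fixed point.
-/

open Equiv.Perm Function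
open scoped Matrix

section OrthogonalMatrix

variable {n R : Type*} [Fintype n] [DecidableEq n] [CommRing R]

theorem charpoly_eq_charpolyRev_of_mul_transpose_eq_one {M : Matrix n n R} (hM : M * Mᵀ = 1) :
    M.charpoly = (-1) ^ Fintype.card n * C M.det * M.charpolyRev := by
  have det_mul_self : M.det * M.det = 1 := by
    simpa only [Matrix.det_mul, Matrix.det_transpose, Matrix.det_one] using congrArg Matrix.det hM
  have isUnit_det : IsUnit M.det := .of_mul_eq_one _ det_mul_self
  have isUnit_M : IsUnit M := (Matrix.isUnit_iff_isUnit_det M).2 isUnit_det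
  have inverse_det : Ring.inverse M.det = M.det :=
    left_inv_eq_right_inv (Ring.inverse_mul_cancel _ isUnit_det) det_mul_self
  calc
    M.charpoly = M⁻¹.charpoly := by rw [Matrix.inv_eq_right_inv hM, Matrix.charpoly_transpose]
    _ = _ := by rw [Matrix.charpoly_inv M isUnit_M, inverse_det]

theorem coeff_one_charpoly_of_mul_transpose_eq_one {M : Matrix n n R} (hM : M * Mᵀ = 1) :
    M.charpoly.coeff 1 = (-1) ^ (Fintype.card n + 1) * M.det * M.trace := by
  have sign_eq_C : ((-1) ^ Fintype.card n * C M.det : R[X]) =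
      C ((-1) ^ Fintype.card n * M.det) := by simp
  rw [charpoly_eq_charpolyRev_of_mul_transpose_eq_one hM, sign_eq_C, coeff_C_mul,
    Matrix.coeff_charpolyRev_eq_neg_trace]
  ring

theorem d4_test_eq_trace_mul_of_mul_transpose_eq_one {M : Matrix (Fin 4) (Fin 4) R}
    (hM : M * Mᵀ = 1) {s₁ s₂ s₃ : R}
    (h : M.charpoly = (X - 1) * (X ^ 3 - C s₁ * X ^ 2 + C s₂ * X - C s₃)) :
    s₁ ^ 2 - s₁ - s₂ - s₃ - 2 = M.trace * (M.trace - M.det - 3) := by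
  have trace_eq : M.trace = s₁ + 1 := by
    rw [Matrix.trace_eq_neg_charpoly_coeff, h]
    simp [sub_mul, coeff_X_pow, coeff_X_mul, add_comm]
  have det_eq : M.det = s₃ := by
    rw [Matrix.det_eq_sign_charpoly_coeff, h]
    norm_num
  have linear_coeff : -s₃ - s₂ = (-1) ^ 5 * M.det * M.trace := by
    simpa [h, sub_mul, coeff_X, coeff_X_pow, coeff_X_mul, coeff_C] using
      coeff_one_charpoly_of_mul_transpose_eq_one hM
  rw [trace_eq, det_eq] at linear_coeff ⊢
  linear_combination linear_coeff

end OrthogonalMatrix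

section PermutationMatrix

variable {n : ℕ} (σ : Equiv.Perm (Fin n))

theorem permMatrixQ_eq_transpose : permMatrixQ σ = (σ.permMatrix ℚ)ᵀ := by
  ext i j
  simp [permMatrixQ, PEquiv.toMatrix_apply, eq_comm]

theorem permMatrixQ_mul_transpose : permMatrixQ σ * (permMatrixQ σ)ᵀ = 1 := by
  rw [permMatrixQ_eq_transpose, Matrix.transpose_transpose, Matrix.transpose_permMatrix,
    ← Matrix.permMatrix_mul, mul_inv_cancel, Matrix.permMatrix_one]

theorem trace_permMatrixQ : (permMatrixQ σ).trace = (fixedPoints σ).ncard := by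
  rw [permMatrixQ_eq_transpose, Matrix.trace_transpose, Matrix.trace_permutation]

theorem det_permMatrixQ : (permMatrixQ σ).det = sign σ := by
  rw [permMatrixQ_eq_transpose, Matrix.det_transpose, Matrix.det_permutation]

theorem isRoot_charpoly_permMatrixQ [NeZero n] : (permMatrixQ σ).charpoly.IsRoot 1 := by
  have fixes_one : (1 - σ.permMatrix ℚ) *ᵥ 1 = 0 := by
    rw [Matrix.sub_mulVec, Matrix.one_mulVec, Matrix.permMatrix_mulVec]
    exact sub_self 1
  rw [permMatrixQ_eq_transpose, Matrix.charpoly_transpose, IsRoot.def, Matrix.eval_charpoly,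
    map_one]
  exact Matrix.exists_mulVec_eq_zero_iff.1 ⟨1, one_ne_zero, fixes_one⟩

end PermutationMatrix

theorem exists_eq_X_sub_one_mul_cubic {R : Type*} [CommRing R] {p : R[X]}
    (monic_p : p.Monic) (natDegree_p : p.natDegree = 4) (root_p : p.IsRoot 1) :
    ∃ s₁ s₂ s₃ : R, p = (X - 1) * (X ^ 3 - C s₁ * X ^ 2 + C s₂ * X - C s₃) := by
  rcases subsingleton_or_nontrivial R with _ | _
  · exact ⟨0, 0, 0, Subsingleton.elim _ _⟩
  obtain ⟨q, hq⟩ := dvd_iff_isRoot.2 root_p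
  have monic_q : q.Monic := (monic_X_sub_C 1).of_mul_monic_left (hq ▸ monic_p)
  have natDegree_q : q.natDegree = 3 := by
    rw [hq, (monic_X_sub_C 1).natDegree_mul monic_q, natDegree_X_sub_C] at natDegree_p
    omega
  refine ⟨-q.coeff 2, q.coeff 1, -q.coeff 0, hq.trans ?_⟩
  conv_lhs => rw [monic_q.as_sum, natDegree_q]
  simp only [Finset.sum_range_succ, Finset.sum_range_zero, map_neg, map_one]
  ring

section FixedPoints

variable {α : Type*}

theorem ncard_fixedPoints_add_card_support [Fintype α] [DecidableEq α] (σ : Equiv.Perm α) :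
    (fixedPoints σ).ncard + σ.support.card = Fintype.card α := by
  have fixedPoints_eq : fixedPoints σ = ↑σ.supportᶜ := by
    ext i
    simp [IsFixedPt]
  rw [fixedPoints_eq, Set.ncard_coe_finset, Finset.card_compl_add_card]

theorem ncard_fixedPoints_ne_one_of_commute {σ τ : Equiv.Perm α} (hστ : Commute σ τ)
    (hτ : ∀ i, τ i ≠ i) : (fixedPoints σ).ncard ≠ 1 := by
  intro h
  obtain ⟨i, fixedPoints_eq⟩ := Set.ncard_eq_one.1 h
  have σ_i : σ i = i := (Set.ext_iff.1 fixedPoints_eq i).2 rfl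
  have σ_τ_i : σ (τ i) = τ i := by rw [← mul_apply, hστ.eq, mul_apply, σ_i]
  exact hτ i ((Set.ext_iff.1 fixedPoints_eq (τ i)).1 σ_τ_i)

end FixedPoints

section SymFour

variable {σ : Equiv.Perm (Fin 4)}

theorem isThreeCycle_iff_ncard_fixedPoints_eq_one :
    σ.IsThreeCycle ↔ (fixedPoints σ).ncard = 1 := by
  have := ncard_fixedPoints_add_card_support σ
  rw [Fintype.card_fin] at this
  rw [← card_support_eq_three_iff]
  omega

theorem ncard_fixedPoints_mul_eq_zero_iff :
    ((fixedPoints σ).ncard * ((fixedPoints σ).ncard - (sign σ : ℤ) - 3) : ℤ) = 0 ↔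
      ¬ σ.IsThreeCycle := by
  have ncard_add := ncard_fixedPoints_add_card_support σ
  rw [Fintype.card_fin] at ncard_add
  have ncard_le : (fixedPoints σ).ncard ≤ 4 := by omega
  rw [isThreeCycle_iff_ncard_fixedPoints_eq_one]
  interval_cases hk : (fixedPoints σ).ncard
  · simp
  · have sign_σ : sign σ = 1 := (isThreeCycle_iff_ncard_fixedPoints_eq_one.2 hk).sign
    simp [sign_σ]
  · have sign_σ : sign σ = -1 := (Equiv.Perm.card_support_eq_two.1 (by omega)).sign_eq
    simp [sign_σ]
  · exact absurd (show σ.support.card = 1 by omega) (card_support_ne_one σ)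
  · have σ_eq : σ = 1 := card_support_eq_zero.1 (by omega)
    simp [σ_eq]

theorem closure_le_centralizer_finRotate_sq :
    Subgroup.closure {finRotate 4, Equiv.swap (0 : Fin 4) 2} ≤
      Subgroup.centralizer {finRotate 4 ^ 2} := by
  rw [Subgroup.closure_le]
  rintro σ (rfl | rfl) <;> rw [SetLike.mem_coe, Subgroup.mem_centralizer_singleton_iff] <;> decide

theorem not_isThreeCycle_of_mem_closure
    (hσ : σ ∈ Subgroup.closure {finRotate 4, Equiv.swap (0 : Fin 4) 2}) : ¬ σ.IsThreeCycle := by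
  have commute_antipode : Commute σ (finRotate 4 ^ 2) :=
    Subgroup.mem_centralizer_singleton_iff.1 (closure_le_centralizer_finRotate_sq hσ)
  rw [isThreeCycle_iff_ncard_fixedPoints_eq_one]
  exact ncard_fixedPoints_ne_one_of_commute commute_antipode (by decide)

end SymFour

theorem kernel_ideal_test_for_D4_general (σ : Equiv.Perm (Fin 4)) :
    (∃ s₁ s₂ s₃ : ℚ,
      (permMatrixQ σ).charpoly = (X - 1) * (X ^ 3 - C s₁ * X ^ 2 + C s₂ * X - C s₃)) ∧
    ∀ s₁ s₂ s₃ : ℚ,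
      (permMatrixQ σ).charpoly = (X - 1) * (X ^ 3 - C s₁ * X ^ 2 + C s₂ * X - C s₃) →
      (s₁ ^ 2 - s₁ - s₂ - s₃ - 2 = 0 ↔ ¬ σ.IsThreeCycle) := by
  refine ⟨exists_eq_X_sub_one_mul_cubic (Matrix.charpoly_monic _)
    (Matrix.charpoly_natDegree_eq_dim _) (isRoot_charpoly_permMatrixQ σ), fun s₁ s₂ s₃ h => ?_⟩
  rw [d4_test_eq_trace_mul_of_mul_transpose_eq_one (permMatrixQ_mul_transpose σ) h,
    trace_permMatrixQ, det_permMatrixQ, ← ncard_fixedPoints_mul_eq_zero_iff]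
  norm_cast

/-- Let `D₄ ≤ Sym(4)` be generated by the 4-cycle `(1 2 3 4)` and the transposition
`(1 3)`.  Writing the characteristic polynomial of the permutation matrix of `σ` as
`(X - 1)(X³ - s₁X² + s₂X - s₃)`, the polynomial `s₁² - s₁ - s₂ - s₃ - 2` vanishes on all
of `D₄`, but not on all of `Sym(4)`: its vanishing is a test for `D₄`. -/
theorem kernel_ideal_test_for_D4 :
    (∀ σ ∈ Subgroup.closure {finRotate 4, Equiv.swap (0 : Fin 4) 2},
      ∀ s₁ s₂ s₃ : ℚ,
        (permMatrixQ σ).charpoly = (X - 1) * (X ^ 3 - C s₁ * X ^ 2 + C s₂ * X - C s₃) →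
        s₁ ^ 2 - s₁ - s₂ - s₃ - 2 = 0) ∧
    ∃ σ : Equiv.Perm (Fin 4), ∃ s₁ s₂ s₃ : ℚ,
      (permMatrixQ σ).charpoly = (X - 1) * (X ^ 3 - C s₁ * X ^ 2 + C s₂ * X - C s₃) ∧
      s₁ ^ 2 - s₁ - s₂ - s₃ - 2 ≠ 0 := by
  refine ⟨fun σ hσ s₁ s₂ s₃ h => ((kernel_ideal_test_for_D4_general σ).2 s₁ s₂ s₃ h).2
    (not_isThreeCycle_of_mem_closure hσ), Equiv.swap 0 1 * Equiv.swap 0 2, ?_⟩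
  obtain ⟨⟨s₁, s₂, s₃, h⟩, test_iff⟩ :=
    kernel_ideal_test_for_D4_general (Equiv.swap 0 1 * Equiv.swap 0 2)
  exact ⟨s₁, s₂, s₃, h, fun h_zero => (test_iff s₁ s₂ s₃ h).1 h_zero
    (isThreeCycle_swap_mul_swap_same (by decide) (by decide) (by decide))⟩
end

section
/- Let G₀ be the subgroup of Sym(8) generated by (1 2 3 8)(4 5 6 7) and (1 5)(3 7), and let G₁ be the subgroup of Sym(8) generated by (1 3 5 7)(2 4 6 8), (1 4 5 8)(2 3 6 7), and (1 5)(3 7). Then G₀ and G₁ both have order 16, and for every cycle type λ, the number of elements of G₀ with cycle type λ equals the number of elements of G₁ with cycle type λ. In particular the two permutation groups have identical cycle type distributions (probabilities 1/16, 5/16, 1/8, 1/2 on the occurring types). -/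
/-!
In both groups every element can be brought into the form `a ^ i * b ^ j * c ^ k` with `i < 4`
and `j, k < 2`. In `8T10` one takes `b = (1 5)(3 7)` and `c = (2 6)(4 8)`: these involutions commute
and are swapped under conjugation by the first generator `a`. In `8T11` the first generator `a` is
central and the other two factors are the involutions `(1 5)(3 7)` and
`a * (1 4 5 8)(2 3 6 7)`, whose commutator is `a ^ 2`. Running through the sixteen normal forms,
both groups consist of the identity, two elements of type `2²`, five of type `2⁴` and eight of
type `4²`.
-/

section NormalForm

variable {G : Type*} [Group G]

/-- The set of ordered products of powers of `a`, `b` and `c`; natural exponents suffice because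
it is used for elements of finite order. -/
def powersProduct (a b c : G) : Set G :=
  {g | ∃ i j k : ℕ, a ^ i * b ^ j * c ^ k = g}

lemma coe_closure_subset_of_forall_mul_mem {s t : Set G}
    (isOfFinOrder : ∀ x ∈ s, IsOfFinOrder x) (one_mem : 1 ∈ t)
    (mul_mem : ∀ g ∈ t, ∀ x ∈ s, g * x ∈ t) : (Subgroup.closure s : Set G) ⊆ t := by
  intro g hg
  rw [SetLike.mem_coe, ← Subgroup.mem_toSubmonoid,
    Subgroup.closure_toSubmonoid_of_isOfFinOrder isOfFinOrder] at hg
  induction hg using Submonoid.closure_induction_right with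
  | one => exact one_mem
  | mul_right g _ x hx hgt => exact mul_mem g hgt x hx

lemma powersProduct_subset {H : Subgroup G} {a b c : G} (ha : a ∈ H) (hb : b ∈ H) (hc : c ∈ H) :
    powersProduct a b c ⊆ H := by
  rintro _ ⟨i, j, k, rfl⟩
  exact mul_mem (mul_mem (pow_mem ha i) (pow_mem hb j)) (pow_mem hc k)

lemma powersProduct_eq_range {a b c : G} {l m n : ℕ} [NeZero l] [NeZero m] [NeZero n]
    (ha : a ^ l = 1) (hb : b ^ m = 1) (hc : c ^ n = 1) :
    powersProduct a b c =
      Set.range fun p : Fin l × Fin m × Fin n ↦ a ^ p.1.val * b ^ p.2.1.val * c ^ p.2.2.val := by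
  apply Set.Subset.antisymm
  · rintro _ ⟨i, j, k, rfl⟩
    refine ⟨(Fin.ofNat l i, Fin.ofNat m j, Fin.ofNat n k), ?_⟩
    simp only [Fin.val_ofNat, ← pow_eq_pow_mod _ ha, ← pow_eq_pow_mod _ hb, ← pow_eq_pow_mod _ hc]
  · rintro _ ⟨p, rfl⟩
    exact ⟨p.1, p.2.1, p.2.2, rfl⟩

lemma coe_closure_pair_eq_powersProduct {a b c : G} (ha_fin : IsOfFinOrder a)
    (hb_fin : IsOfFinOrder b) (hbc : Commute b c) (hab : SemiconjBy a b c)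
    (hac : SemiconjBy a c b) :
    (Subgroup.closure {a, b} : Set G) = powersProduct a b c := by
  have ha : a ∈ Subgroup.closure {a, b} := Subgroup.subset_closure (by simp)
  have hb : b ∈ Subgroup.closure {a, b} := Subgroup.subset_closure (by simp)
  have hc : c ∈ Subgroup.closure {a, b} := by
    rw [← mul_inv_eq_of_eq_mul hab.eq]
    exact mul_mem (mul_mem ha hb) (inv_mem ha)
  refine Set.Subset.antisymm (coe_closure_subset_of_forall_mul_mem (by simp [ha_fin, hb_fin])
    ⟨0, 0, 0, by simp⟩ ?_) (powersProduct_subset ha hb hc)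
  rintro _ ⟨i, j, k, rfl⟩
  simp only [Set.mem_insert_iff, Set.mem_singleton_iff, forall_eq_or_imp, forall_eq]
  refine ⟨⟨i + 1, k, j, ?_⟩, ⟨i, j + 1, k, ?_⟩⟩
  · calc a ^ (i + 1) * b ^ k * c ^ j
        = a ^ i * (a * c ^ j * b ^ k) := by
          rw [mul_assoc a, ← (hbc.pow_pow k j).eq, pow_succ]; simp only [mul_assoc]
      _ = a ^ i * (b ^ j * (a * b ^ k)) := by rw [(hac.pow_right j).eq, mul_assoc (b ^ j)]
      _ = a ^ i * b ^ j * c ^ k * a := by rw [(hab.pow_right k).eq]; simp only [mul_assoc]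
  · calc a ^ i * b ^ (j + 1) * c ^ k
        = a ^ i * b ^ j * (b * c ^ k) := by rw [pow_succ]; simp only [mul_assoc]
      _ = a ^ i * b ^ j * c ^ k * b := by rw [(hbc.pow_right k).eq, ← mul_assoc]

lemma coe_closure_triple_eq_powersProduct {a b c : G} {n : ℕ} (ha_fin : IsOfFinOrder a)
    (hb_fin : IsOfFinOrder b) (hc_fin : IsOfFinOrder c) (hab : Commute a b) (hac : Commute a c)
    (hcb : c * b = a ^ n * b * c) :
    (Subgroup.closure {a, b, c} : Set G) = powersProduct a b c := by
  have subset_closure : powersProduct a b c ⊆ Subgroup.closure {a, b, c} :=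
    powersProduct_subset (Subgroup.subset_closure (by simp)) (Subgroup.subset_closure (by simp))
      (Subgroup.subset_closure (by simp))
  have semiconj : SemiconjBy b (a ^ n * c) c := by
    rw [SemiconjBy, hcb, ← mul_assoc, (hab.pow_left n).eq]
  have pow_c_mul_b (k : ℕ) : c ^ k * b = a ^ (n * k) * b * c ^ k := by
    rw [← (semiconj.pow_right k).eq, (hac.pow_left n).mul_pow, ← pow_mul, ← mul_assoc,
      (hab.pow_left (n * k)).eq]
  refine Set.Subset.antisymm (coe_closure_subset_of_forall_mul_mem
    (by simp [ha_fin, hb_fin, hc_fin]) ⟨0, 0, 0, by simp⟩ ?_) subset_closure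
  rintro _ ⟨i, j, k, rfl⟩
  simp only [Set.mem_insert_iff, Set.mem_singleton_iff, forall_eq_or_imp, forall_eq]
  refine ⟨⟨i + 1, j, k, ?_⟩, ⟨i + n * k, j + 1, k, ?_⟩, ⟨i, j, k + 1, ?_⟩⟩
  · have commute_a : Commute a (b ^ j * c ^ k) := (hab.pow_right j).mul_right (hac.pow_right k)
    rw [pow_succ, mul_assoc, mul_assoc, commute_a.eq]
    simp only [mul_assoc]
  · calc a ^ (i + n * k) * b ^ (j + 1) * c ^ k
        = a ^ i * (a ^ (n * k) * b ^ j) * b * c ^ k := by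
          rw [pow_add, pow_succ]; simp only [mul_assoc]
      _ = a ^ i * b ^ j * (c ^ k * b) := by
          rw [(hab.pow_pow (n * k) j).eq, pow_c_mul_b]; simp only [mul_assoc]
      _ = a ^ i * b ^ j * c ^ k * b := (mul_assoc _ _ _).symm
  · rw [pow_succ, ← mul_assoc]

lemma closure_triple_eq_closure_triple_mul (a b c : G) :
    Subgroup.closure {a, b, c} = Subgroup.closure {a, c, a * b} := by
  apply le_antisymm <;> rw [Subgroup.closure_le]
  · have ha : a ∈ Subgroup.closure {a, c, a * b} := Subgroup.subset_closure (by simp)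
    have hab : a * b ∈ Subgroup.closure {a, c, a * b} := Subgroup.subset_closure (by simp)
    rintro x (rfl | rfl | rfl)
    · exact ha
    · exact (Subgroup.mul_mem_cancel_left _ ha).mp hab
    · exact Subgroup.subset_closure (by simp)
  · rintro x (rfl | rfl | rfl)
    · exact Subgroup.subset_closure (by simp)
    · exact Subgroup.subset_closure (by simp)
    · exact mul_mem (Subgroup.subset_closure (by simp)) (Subgroup.subset_closure (by simp))

end NormalForm

section CycleTypes

variable {α : Type*} [Fintype α] [DecidableEq α]

/-- The cycle type distribution of a permutation group: the cycle types of its elements, each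
counted with the number of elements having it. -/
noncomputable def cycleTypes (G : Subgroup (Equiv.Perm α)) : Multiset (Multiset ℕ) :=
  (G : Set (Equiv.Perm α)).toFinite.toFinset.val.map Equiv.Perm.cycleType

lemma card_cycleTypes (G : Subgroup (Equiv.Perm α)) : (cycleTypes G).card = Nat.card G := by
  rw [cycleTypes, Multiset.card_map, Finset.card_val]
  exact (Nat.card_eq_card_finite_toFinset _).symm

lemma count_cycleTypes (G : Subgroup (Equiv.Perm α)) (lam : Multiset ℕ) :
    (cycleTypes G).count lam =
      Nat.card {σ : Equiv.Perm α // σ ∈ G ∧ σ.cycleType = lam} := by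
  rw [Nat.subtype_card ((G : Set (Equiv.Perm α)).toFinite.toFinset.filter (lam = ·.cycleType))
    (by simp [eq_comm]), cycleTypes, Multiset.count_map]
  rfl

lemma cycleTypes_eq_map_image {ι : Type*} [Fintype ι] {G : Subgroup (Equiv.Perm α)}
    {f : ι → Equiv.Perm α} (hf : (G : Set (Equiv.Perm α)) = Set.range f) :
    cycleTypes G = (Finset.univ.image f).val.map Equiv.Perm.cycleType := by
  have toFinset_eq : (G : Set (Equiv.Perm α)).toFinite.toFinset = Finset.univ.image f := by
    ext σ
    rw [Set.Finite.mem_toFinset, hf]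
    simp
  rw [cycleTypes, toFinset_eq]

end CycleTypes

/-- The transitive group `8T10`, with points numbered from `0`. -/
def group8T10 : Subgroup (Equiv.Perm (Fin 8)) :=
  Subgroup.closure
    {([0, 1, 2, 7] : List (Fin 8)).formPerm * ([3, 4, 5, 6] : List (Fin 8)).formPerm,
     Equiv.swap (0 : Fin 8) 4 * Equiv.swap 2 6}

/-- The transitive group `8T11`, with points numbered from `0`. -/
def group8T11 : Subgroup (Equiv.Perm (Fin 8)) :=
  Subgroup.closure
    {([0, 2, 4, 6] : List (Fin 8)).formPerm * ([1, 3, 5, 7] : List (Fin 8)).formPerm,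
     ([0, 3, 4, 7] : List (Fin 8)).formPerm * ([1, 2, 5, 6] : List (Fin 8)).formPerm,
     Equiv.swap (0 : Fin 8) 4 * Equiv.swap 2 6}

/-- The cycle type distribution shared by `8T10` and `8T11`; `0` is the type of the identity. -/
def commonCycleTypes : Multiset (Multiset ℕ) :=
  {0} + Multiset.replicate 2 {2, 2} + Multiset.replicate 5 {2, 2, 2, 2} +
    Multiset.replicate 8 {4, 4}

lemma card_commonCycleTypes : commonCycleTypes.card = 16 := rfl

lemma coe_group8T10_eq_powersProduct :
    (group8T10 : Set (Equiv.Perm (Fin 8))) =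
      powersProduct
        (([0, 1, 2, 7] : List (Fin 8)).formPerm * ([3, 4, 5, 6] : List (Fin 8)).formPerm)
        (Equiv.swap 0 4 * Equiv.swap 2 6) (Equiv.swap 1 5 * Equiv.swap 3 7) :=
  coe_closure_pair_eq_powersProduct (isOfFinOrder_of_finite _) (isOfFinOrder_of_finite _)
    (by rw [commute_iff_eq]; decide +kernel) (by rw [SemiconjBy]; decide +kernel)
    (by rw [SemiconjBy]; decide +kernel)

lemma coe_group8T11_eq_powersProduct :
    (group8T11 : Set (Equiv.Perm (Fin 8))) =
      powersProduct
        (([0, 2, 4, 6] : List (Fin 8)).formPerm * ([1, 3, 5, 7] : List (Fin 8)).formPerm)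
        (Equiv.swap 0 4 * Equiv.swap 2 6)
        (Equiv.swap 0 5 * Equiv.swap 1 4 * Equiv.swap 2 7 * Equiv.swap 3 6) := by
  have mul_eq :
      (([0, 2, 4, 6] : List (Fin 8)).formPerm * ([1, 3, 5, 7] : List (Fin 8)).formPerm) *
          (([0, 3, 4, 7] : List (Fin 8)).formPerm * ([1, 2, 5, 6] : List (Fin 8)).formPerm) =
        Equiv.swap 0 5 * Equiv.swap 1 4 * Equiv.swap 2 7 * Equiv.swap 3 6 := by
    decide +kernel
  rw [group8T11, closure_triple_eq_closure_triple_mul, mul_eq]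
  exact coe_closure_triple_eq_powersProduct (n := 2) (isOfFinOrder_of_finite _)
    (isOfFinOrder_of_finite _) (isOfFinOrder_of_finite _)
    (by rw [commute_iff_eq]; decide +kernel) (by rw [commute_iff_eq]; decide +kernel)
    (by decide +kernel)

lemma cycleTypes_group8T10 : cycleTypes group8T10 = commonCycleTypes := by
  rw [cycleTypes_eq_map_image (coe_group8T10_eq_powersProduct.trans
    (powersProduct_eq_range (l := 4) (m := 2) (n := 2)
      (by decide +kernel) (by decide +kernel) (by decide +kernel)))]
  decide +kernel

lemma cycleTypes_group8T11 : cycleTypes group8T11 = commonCycleTypes := by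
  rw [cycleTypes_eq_map_image (coe_group8T11_eq_powersProduct.trans
    (powersProduct_eq_range (l := 4) (m := 2) (n := 2)
      (by decide +kernel) (by decide +kernel) (by decide +kernel)))]
  decide +kernel

/-- The transitive groups `8T10` and `8T11`: `G₀ ≤ Sym(8)` generated by
`(1 2 3 8)(4 5 6 7)` and `(1 5)(3 7)`, and `G₁ ≤ Sym(8)` generated by
`(1 3 5 7)(2 4 6 8)`, `(1 4 5 8)(2 3 6 7)` and `(1 5)(3 7)` (0-based on `Fin 8`),
both have order 16 and identical cycle type distributions: for every cycle type `lam`,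
they contain the same number of elements of cycle type `lam`. -/
theorem eq_cycle_type_distributions_8T10_8T11 :
    ∀ G₀ G₁ : Subgroup (Equiv.Perm (Fin 8)),
      G₀ = Subgroup.closure
          {([0, 1, 2, 7] : List (Fin 8)).formPerm * ([3, 4, 5, 6] : List (Fin 8)).formPerm,
           Equiv.swap (0 : Fin 8) 4 * Equiv.swap 2 6} →
      G₁ = Subgroup.closure
          {([0, 2, 4, 6] : List (Fin 8)).formPerm * ([1, 3, 5, 7] : List (Fin 8)).formPerm,
           ([0, 3, 4, 7] : List (Fin 8)).formPerm * ([1, 2, 5, 6] : List (Fin 8)).formPerm,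
           Equiv.swap (0 : Fin 8) 4 * Equiv.swap 2 6} →
      Nat.card G₀ = 16 ∧ Nat.card G₁ = 16 ∧
      ∀ lam : Multiset ℕ,
        Nat.card {σ : Equiv.Perm (Fin 8) // σ ∈ G₀ ∧ σ.cycleType = lam} =
        Nat.card {σ : Equiv.Perm (Fin 8) // σ ∈ G₁ ∧ σ.cycleType = lam} := by
  rintro G₀ G₁ (rfl : G₀ = group8T10) (rfl : G₁ = group8T11)
  refine ⟨?_, ?_, fun lam ↦ ?_⟩
  · rw [← card_cycleTypes, cycleTypes_group8T10, card_commonCycleTypes]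
  · rw [← card_cycleTypes, cycleTypes_group8T11, card_commonCycleTypes]
  · rw [← count_cycleTypes, ← count_cycleTypes, cycleTypes_group8T10, cycleTypes_group8T11]
end
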